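/- Let A and B be nonempty compact subsets of the Euclidean plane with hausdorffDist A B = 1, let α ∈ [0,1] and φ ≥ 0. Then the mixed morph satisfies hausdorffDist A (M_{α,φ}(A,B)) = α and hausdorffDist B (M_{α,φ}(A,B)) = 1 − α; that is, the mixed morph is a Hausdorff morph. -/

import Mathlib

/-!
Moving a point a fraction `α` of the way towards a nearest point of the other set moves it by at
most `α * hausdorffDist A B`. So the Voronoi morph lies in the dilation morph and, since every point
of `A` and of `B` starts or ends such a segment, any set `M` between the two morphs is within
`α * hausdorffDist A B` of `A` and `(1 - α) * hausdorffDist A B` of `B`. These bounds add up to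
`hausdorffDist A B`, so the triangle inequality forces equality in both. The mixed morph is such an
`M` because closing is extensive.
-/

open Metric Set Pointwise

noncomputable section

/-- The Euclidean plane. -/
abbrev Plane := EuclideanSpace ℝ (Fin 2)

/-- The Voronoi morph: each point of `A` is moved a fraction `α` of the way towards a
nearest point of `B`, and each point of `B` is moved a fraction `1 - α` of the way towards
a nearest point of `A`; all nearest points are used when they are not unique. -/
def voronoiMorph (A B : Set Plane) (α : ℝ) : Set Plane :=
  {p | ∃ a ∈ A, ∃ b ∈ B, dist a b = Metric.infDist a B ∧ p = (1 - α) • a + α • b} ∪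
  {p | ∃ b ∈ B, ∃ a ∈ A, dist b a = Metric.infDist b A ∧ p = (1 - α) • a + α • b}

/-- The dilation morph `S_α(A,B) = (A ⊕ D_α) ∩ (B ⊕ D_{1-α})`. -/
def dilationMorph (A B : Set Plane) (α : ℝ) : Set Plane :=
  (A + Metric.closedBall (0 : Plane) α) ∩ (B + Metric.closedBall (0 : Plane) (1 - α))

/-- The closing of a set by a disk of radius `φ`: dilation followed by erosion. -/
def closing (X : Set Plane) (φ : ℝ) : Set Plane :=
  ((X + Metric.closedBall (0 : Plane) φ)ᶜ + Metric.closedBall (0 : Plane) φ)ᶜ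

/-- The mixed morph `M_{α,φ}(A,B)`. -/
def mixedMorph (A B : Set Plane) (α φ : ℝ) : Set Plane :=
  closing (voronoiMorph A B α) φ ∩ dilationMorph A B α

theorem hausdorffDist_eq_of_hausdorffEDist_le {X : Type*} [PseudoMetricSpace X] {s t u : Set X}
    {r₁ r₂ : ℝ} (hr₁ : 0 ≤ r₁) (hr₂ : 0 ≤ r₂) (hs : hausdorffEDist s u ≤ ENNReal.ofReal r₁)
    (ht : hausdorffEDist t u ≤ ENNReal.ofReal r₂) (h : r₁ + r₂ ≤ hausdorffDist s t) :
    hausdorffDist s u = r₁ ∧ hausdorffDist t u = r₂ := by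
  have hs' : hausdorffDist s u ≤ r₁ := ENNReal.toReal_le_of_le_ofReal hr₁ hs
  have ht' : hausdorffDist t u ≤ r₂ := ENNReal.toReal_le_of_le_ofReal hr₂ ht
  have htri : hausdorffDist s t ≤ hausdorffDist s u + hausdorffDist t u := by
    rw [hausdorffDist_comm (s := t)]
    exact hausdorffDist_triangle (ne_top_of_le_ne_top ENNReal.ofReal_ne_top hs)
  constructor <;> linarith

section NearestPairs

variable {X : Type*} [PseudoMetricSpace X] {A B : Set X}

/-- The pairs of points of `A` and `B` in which one point is nearest to the other: the pairs that
the Voronoi morph interpolates. -/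
def nearestPairs (A B : Set X) : Set (X × X) :=
  {p | p.1 ∈ A ∧ p.2 ∈ B ∧ (dist p.1 p.2 = infDist p.1 B ∨ dist p.2 p.1 = infDist p.2 A)}

theorem swap_mem_nearestPairs {p : X × X} : p.swap ∈ nearestPairs B A ↔ p ∈ nearestPairs A B := by
  simp only [nearestPairs, mem_ofPred_eq, Prod.fst_swap, Prod.snd_swap]
  tauto

theorem exists_mk_mem_nearestPairs [ProperSpace X] (hB : IsClosed B) (hBne : B.Nonempty) {a : X}
    (ha : a ∈ A) : ∃ b, (a, b) ∈ nearestPairs A B := by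
  obtain ⟨b, hb, hab⟩ := hB.exists_infDist_eq_dist hBne a
  exact ⟨b, ha, hb, Or.inl hab.symm⟩

theorem dist_le_hausdorffDist_of_mem_nearestPairs (hAB : hausdorffEDist A B ≠ ⊤) {p : X × X}
    (hp : p ∈ nearestPairs A B) : dist p.1 p.2 ≤ hausdorffDist A B := by
  obtain ⟨ha, hb, h | h⟩ := hp
  · exact h.trans_le (infDist_le_hausdorffDist_of_mem ha hAB)
  · rw [dist_comm, h, hausdorffDist_comm]
    exact infDist_le_hausdorffDist_of_mem hb (hausdorffEDist_comm.trans_ne hAB)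

end NearestPairs

section NormedSpace

variable {E : Type*} [SeminormedAddCommGroup E]

theorem mem_add_closedBall_zero {A : Set E} {r : ℝ} {p : E} :
    p ∈ A + closedBall (0 : E) r ↔ ∃ a ∈ A, dist p a ≤ r := by
  simp only [mem_add, mem_closedBall_zero_iff, dist_eq_norm]
  constructor
  · rintro ⟨a, ha, v, hv, rfl⟩
    exact ⟨a, ha, by rwa [add_sub_cancel_left]⟩
  · rintro ⟨a, ha, hpa⟩
    exact ⟨a, ha, p - a, hpa, add_sub_cancel a p⟩

variable [NormedSpace ℝ E] {A B M : Set E} {α : ℝ}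

/-- The Voronoi morph of two sets in an arbitrary real normed space, with the segment from `a` to
`b` parametrized by `AffineMap.lineMap`. -/
def voronoiInterpolation (A B : Set E) (α : ℝ) : Set E :=
  (fun p : E × E ↦ AffineMap.lineMap p.1 p.2 α) '' nearestPairs A B

theorem voronoiInterpolation_one_sub (A B : Set E) (α : ℝ) :
    voronoiInterpolation B A (1 - α) = voronoiInterpolation A B α := by
  have hswap : nearestPairs A B = Prod.swap ⁻¹' nearestPairs B A :=
    Set.ext fun _ ↦ swap_mem_nearestPairs.symm
  rw [voronoiInterpolation, voronoiInterpolation, hswap, ← image_swap_eq_preimage_swap, image_image]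
  simp only [AffineMap.lineMap_apply_one_sub, Prod.fst_swap, Prod.snd_swap]

theorem dist_lineMap_left_le_of_mem_nearestPairs (hAB : hausdorffEDist A B ≠ ⊤) (hα : 0 ≤ α)
    {p : E × E} (hp : p ∈ nearestPairs A B) :
    dist (AffineMap.lineMap p.1 p.2 α) p.1 ≤ α * hausdorffDist A B := by
  rw [dist_lineMap_left, Real.norm_of_nonneg hα]
  exact mul_le_mul_of_nonneg_left (dist_le_hausdorffDist_of_mem_nearestPairs hAB hp) hα

theorem voronoiInterpolation_subset_add_closedBall_left (hAB : hausdorffEDist A B ≠ ⊤)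
    (hα : 0 ≤ α) :
    voronoiInterpolation A B α ⊆ A + closedBall (0 : E) (α * hausdorffDist A B) := by
  rintro _ ⟨p, hp, rfl⟩
  exact mem_add_closedBall_zero.2
    ⟨p.1, hp.1, dist_lineMap_left_le_of_mem_nearestPairs hAB hα hp⟩

theorem voronoiInterpolation_subset_add_closedBall_right (hAB : hausdorffEDist A B ≠ ⊤)
    (hα : α ≤ 1) :
    voronoiInterpolation A B α ⊆ B + closedBall (0 : E) ((1 - α) * hausdorffDist A B) := by
  rw [← voronoiInterpolation_one_sub, hausdorffDist_comm]
  exact voronoiInterpolation_subset_add_closedBall_left (hausdorffEDist_comm.trans_ne hAB)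
    (sub_nonneg.2 hα)

theorem hausdorffEDist_le_of_voronoiInterpolation_subset [ProperSpace E] (hB : IsClosed B)
    (hAB : hausdorffEDist A B ≠ ⊤) (hα : 0 ≤ α) (hM : voronoiInterpolation A B α ⊆ M)
    (hMA : M ⊆ A + closedBall (0 : E) (α * hausdorffDist A B)) :
    hausdorffEDist A M ≤ ENNReal.ofReal (α * hausdorffDist A B) := by
  have hr : 0 ≤ α * hausdorffDist A B := mul_nonneg hα hausdorffDist_nonneg
  refine hausdorffEDist_le_of_mem_edist (fun a ha ↦ ?_) (fun m hm ↦ ?_)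
  · obtain ⟨b, hab⟩ :=
      exists_mk_mem_nearestPairs hB (nonempty_of_hausdorffEDist_ne_top ⟨a, ha⟩ hAB) ha
    refine ⟨AffineMap.lineMap a b α, hM ⟨(a, b), hab, rfl⟩, ?_⟩
    rw [edist_comm, edist_le_ofReal hr]
    exact dist_lineMap_left_le_of_mem_nearestPairs hAB hα hab
  · obtain ⟨a, ha, hma⟩ := mem_add_closedBall_zero.1 (hMA hm)
    exact ⟨a, ha, (edist_le_ofReal hr).2 hma⟩

theorem mixedMorph_hausdorffDist_general [ProperSpace E] (hA : IsClosed A) (hB : IsClosed B)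
    (hAB : hausdorffEDist A B ≠ ⊤) (hα : α ∈ Icc (0 : ℝ) 1)
    (hM : voronoiInterpolation A B α ⊆ M)
    (hMA : M ⊆ A + closedBall (0 : E) (α * hausdorffDist A B))
    (hMB : M ⊆ B + closedBall (0 : E) ((1 - α) * hausdorffDist A B)) :
    hausdorffDist A M = α * hausdorffDist A B ∧
      hausdorffDist B M = (1 - α) * hausdorffDist A B := by
  have h1α : 0 ≤ 1 - α := sub_nonneg.2 hα.2
  have hAM := hausdorffEDist_le_of_voronoiInterpolation_subset hB hAB hα.1 hM hMA
  have hBM : hausdorffEDist B M ≤ ENNReal.ofReal ((1 - α) * hausdorffDist A B) := by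
    rw [← voronoiInterpolation_one_sub] at hM
    rw [hausdorffDist_comm] at hMB ⊢
    exact hausdorffEDist_le_of_voronoiInterpolation_subset hA (hausdorffEDist_comm.trans_ne hAB)
      h1α hM hMB
  exact hausdorffDist_eq_of_hausdorffEDist_le (mul_nonneg hα.1 hausdorffDist_nonneg)
    (mul_nonneg h1α hausdorffDist_nonneg) hAM hBM (by linarith)

end NormedSpace

theorem subset_compl_compl_add_sub {G : Type*} [AddGroup G] (X D : Set G) :
    X ⊆ ((X + D)ᶜ - D)ᶜ := by
  rintro x hx ⟨y, hy, d, hd, rfl⟩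
  exact hy ⟨y - d, hx, d, hd, sub_add_cancel y d⟩

theorem subset_closing (X : Set Plane) (φ : ℝ) : X ⊆ closing X φ := by
  simpa only [closing, sub_eq_add_neg, neg_closedBall, neg_zero] using
    subset_compl_compl_add_sub X (closedBall (0 : Plane) φ)

theorem voronoiMorph_eq_voronoiInterpolation (A B : Set Plane) (α : ℝ) :
    voronoiMorph A B α = voronoiInterpolation A B α := by
  ext p
  simp only [voronoiMorph, voronoiInterpolation, nearestPairs, AffineMap.lineMap_apply_module,
    mem_union, mem_image, mem_ofPred_eq, Prod.exists]
  grind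

theorem voronoiMorph_subset_dilationMorph {A B : Set Plane} (hfin : hausdorffEDist A B ≠ ⊤)
    (hAB : hausdorffDist A B = 1) {α : ℝ} (hα : α ∈ Icc (0 : ℝ) 1) :
    voronoiMorph A B α ⊆ dilationMorph A B α := by
  have hleft := voronoiInterpolation_subset_add_closedBall_left hfin hα.1
  have hright := voronoiInterpolation_subset_add_closedBall_right hfin hα.2
  rw [hAB, mul_one] at hleft hright
  exact voronoiMorph_eq_voronoiInterpolation A B α ▸ subset_inter hleft hright

theorem voronoiMorph_subset_mixedMorph {A B : Set Plane} (hfin : hausdorffEDist A B ≠ ⊤)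
    (hAB : hausdorffDist A B = 1) {α : ℝ} (hα : α ∈ Icc (0 : ℝ) 1) (φ : ℝ) :
    voronoiMorph A B α ⊆ mixedMorph A B α φ :=
  subset_inter (subset_closing _ φ) (voronoiMorph_subset_dilationMorph hfin hAB hα)

theorem mixedMorph_hausdorffDist (A B : Set Plane) (hAne : A.Nonempty) (hBne : B.Nonempty)
    (hA : IsCompact A) (hB : IsCompact B) (hAB : Metric.hausdorffDist A B = 1)
    (α : ℝ) (hα : α ∈ Set.Icc (0 : ℝ) 1) (φ : ℝ) (hφ : 0 ≤ φ) :
    Metric.hausdorffDist A (mixedMorph A B α φ) = α ∧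
    Metric.hausdorffDist B (mixedMorph A B α φ) = 1 - α := by
  have hfin : hausdorffEDist A B ≠ ⊤ :=
    hausdorffEDist_ne_top_of_nonempty_of_bounded hAne hBne hA.isBounded hB.isBounded
  have hmorph := mixedMorph_hausdorffDist_general hA.isClosed hB.isClosed hfin hα
    (M := mixedMorph A B α φ)
  simp only [hAB, mul_one, ← voronoiMorph_eq_voronoiInterpolation] at hmorph
  exact hmorph (voronoiMorph_subset_mixedMorph hfin hAB hα φ)
    (inter_subset_right.trans inter_subset_left) (inter_subset_right.trans inter_subset_right)
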